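/- Let W be a symmetric N×N real matrix with nonnegative entries, zero diagonal, and connected associated graph; let S be diagonal with positive diagonal entries, D the degree matrix, and let 0 = λ_0 < λ_1 ≤ … ≤ λ_{N−1} with S-orthonormal eigenvectors φ_0, …, φ_{N−1} solve (D − W)φ_n = λ_n S φ_n; assume λ_1 < λ_2 (λ_1 is simple). Let p be a positive even integer, and for π = Σ_n a_n φ_n define the modified energy Q(π) = Σ_{n=0}^{N−1} (λ_n)^{p/2} (λ_n − λ_1)^{p/2} a_n^2 (its null space is exactly span{φ_0, φ_1}). Let Ω_1, …, Ω_m (m ≥ 2) be pairwise disjoint nonempty subsets of {1,…,N} such that the averaging map f ↦ (Ave{f|Ω_1}, …, Ave{f|Ω_m}) is injective on span{φ_0, φ_1}. Then for every f ∈ span{φ_0, φ_1}, the unique minimizer of Q subject to Ave{π|Ω_r} = Ave{f|Ω_r} for r = 1,…,m is π = f. -/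

import Mathlib

/-!
The weights `λ_n^{p/2} (λ_n − λ_1)^{p/2}` are nonnegative, vanish for `n = 0, 1` (as `p / 2 > 0`)
and are positive otherwise, so the energy is nonnegative and its null space is exactly
`span{φ_0, φ_1}`: orthonormality kills the higher coefficients on the span, and conversely a
vector whose higher coefficients vanish lies in the span by the expansion
`π = ∑ a_n φ_n` (`eigen_expansion`). Hence `f` attains the minimum `0`, any other minimizer
also has zero energy and so lies in the span, and injectivity of the averages identifies it
with `f`.
-/

open Matrix Finset

/-- `N` vectors of `ℝ^N` that are `S`-orthonormal form a basis: writing `A` for the matrix with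
rows `φ n`, orthonormality says `A S Aᵀ = 1`, and for square matrices this gives
`(S Aᵀ) A = 1`. -/
lemma eigen_expansion {N : ℕ} (S : Fin N → ℝ) (φ : Fin N → Fin N → ℝ)
    (horth : ∀ n n', φ n ⬝ᵥ (Matrix.diagonal S *ᵥ φ n') = if n = n' then 1 else 0)
    (x : Fin N → ℝ) :
    x = ∑ n, (x ⬝ᵥ (Matrix.diagonal S *ᵥ φ n)) • φ n := by
  have h1 : Matrix.of φ * (Matrix.diagonal S * (Matrix.of φ)ᵀ) = 1 := by
    ext n n'
    rw [Matrix.one_apply, ← horth n n']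
    rfl
  have h2 := mul_eq_one_comm.mp h1
  calc x = (x ᵥ* (Matrix.diagonal S * (Matrix.of φ)ᵀ)) ᵥ* Matrix.of φ := by
        rw [Matrix.vecMul_vecMul, h2, Matrix.vecMul_one]
    _ = _ := by
        rw [Matrix.vecMul_eq_sum]
        rfl

/-- Second vanishing moment via the modified energy: with `λ_1` simple and the modified
energy `Q(π) = ∑_n λ_n^{p/2} (λ_n − λ_1)^{p/2} a_n²` (coefficients in the `S`-orthonormal
eigenbasis, so `a_n = πᵀ S φ_n`), if the averaging map is injective on `span{φ_0, φ_1}`,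
then for every `f ∈ span{φ_0, φ_1}` the unique minimizer of `Q` subject to
`Ave{π|Ω_r} = Ave{f|Ω_r}` is `π = f`. -/
theorem modified_energy_reproduces_span {N m : ℕ} [NeZero N] (hN : 2 ≤ N) (hm : 2 ≤ m)
    (W : Matrix (Fin N) (Fin N) ℝ) (hWsym : W.IsSymm)
    (hWnn : ∀ i j, 0 ≤ W i j) (hWdiag : ∀ i, W i i = 0)
    (hconn : ∀ i j : Fin N, Relation.ReflTransGen (fun a b => 0 < W a b) i j)
    (S : Fin N → ℝ) (hS : ∀ i, 0 < S i)
    (lam : Fin N → ℝ) (φ : Fin N → Fin N → ℝ)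
    (hlam0 : lam 0 = 0) (hlamPos : ∀ n : Fin N, n ≠ 0 → 0 < lam n)
    (hmono : Monotone lam)
    (hsimple : ∀ n : Fin N, n ≠ 0 → n ≠ 1 → lam 1 < lam n)
    (heig : ∀ n, (Matrix.diagonal (fun i => ∑ j, W i j) - W) *ᵥ φ n
      = lam n • (Matrix.diagonal S *ᵥ φ n))
    (horth : ∀ n n', φ n ⬝ᵥ (Matrix.diagonal S *ᵥ φ n') = if n = n' then 1 else 0)
    (p : ℕ) (hp : 0 < p) (hpe : Even p)
    (Ω : Fin m → Finset (Fin N))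
    (hdisj : ∀ r r', r ≠ r' → Disjoint (Ω r) (Ω r'))
    (hne : ∀ r, (Ω r).Nonempty)
    (hinj : ∀ f g : Fin N → ℝ,
      f ∈ Submodule.span ℝ ({φ 0, φ 1} : Set (Fin N → ℝ)) →
      g ∈ Submodule.span ℝ ({φ 0, φ 1} : Set (Fin N → ℝ)) →
      (∀ r, (∑ i ∈ Ω r, S i * f i) / (∑ i ∈ Ω r, S i)
          = (∑ i ∈ Ω r, S i * g i) / (∑ i ∈ Ω r, S i)) → f = g) :
    ∀ f ∈ Submodule.span ℝ ({φ 0, φ 1} : Set (Fin N → ℝ)),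
      ∀ π : Fin N → ℝ,
        ((∀ r, (∑ i ∈ Ω r, S i * π i) / (∑ i ∈ Ω r, S i)
              = (∑ i ∈ Ω r, S i * f i) / (∑ i ∈ Ω r, S i)) ∧
          ∀ π' : Fin N → ℝ,
            (∀ r, (∑ i ∈ Ω r, S i * π' i) / (∑ i ∈ Ω r, S i)
                = (∑ i ∈ Ω r, S i * f i) / (∑ i ∈ Ω r, S i)) →
            (∑ n, lam n ^ (p / 2) * (lam n - lam 1) ^ (p / 2) *
                (π ⬝ᵥ (Matrix.diagonal S *ᵥ φ n)) ^ 2)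
              ≤ ∑ n, lam n ^ (p / 2) * (lam n - lam 1) ^ (p / 2) *
                (π' ⬝ᵥ (Matrix.diagonal S *ᵥ φ n)) ^ 2)
        ↔ π = f := by
  intro f hf π
  have hk : p / 2 ≠ 0 := by
    obtain ⟨k, rfl⟩ := hpe
    omega
  have hw01 : ∀ n : Fin N, n = 0 ∨ n = 1 →
      lam n ^ (p / 2) * (lam n - lam 1) ^ (p / 2) = 0 := by
    rintro n (rfl | rfl)
    · rw [hlam0, zero_pow hk, zero_mul]
    · rw [sub_self, zero_pow hk, mul_zero]
  have hwpos : ∀ n : Fin N, n ≠ 0 → n ≠ 1 →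
      0 < lam n ^ (p / 2) * (lam n - lam 1) ^ (p / 2) := fun n h0 h1 =>
    mul_pos (pow_pos (hlamPos n h0) _) (pow_pos (sub_pos.mpr (hsimple n h0 h1)) _)
  have hterm : ∀ (x : Fin N → ℝ) (n : Fin N),
      0 ≤ lam n ^ (p / 2) * (lam n - lam 1) ^ (p / 2) *
        (x ⬝ᵥ (Matrix.diagonal S *ᵥ φ n)) ^ 2 := by
    intro x n
    by_cases h : n = 0 ∨ n = 1
    · rw [hw01 n h, zero_mul]
    · push Not at h
      exact mul_nonneg (hwpos n h.1 h.2).le (sq_nonneg _)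
  have hQf : ∑ n, lam n ^ (p / 2) * (lam n - lam 1) ^ (p / 2) *
      (f ⬝ᵥ (Matrix.diagonal S *ᵥ φ n)) ^ 2 = 0 := by
    refine Finset.sum_eq_zero fun n _ => ?_
    by_cases h : n = 0 ∨ n = 1
    · rw [hw01 n h, zero_mul]
    · push Not at h
      obtain ⟨a, b, rfl⟩ := Submodule.mem_span_pair.mp hf
      rw [add_dotProduct, smul_dotProduct, smul_dotProduct, horth, horth,
        if_neg h.1.symm, if_neg h.2.symm]
      simp
  constructor
  · rintro ⟨hav, hmin⟩
    have hle := hmin f fun _ => rfl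
    rw [hQf] at hle
    have hzero := (Finset.sum_eq_zero_iff_of_nonneg fun n _ => hterm π n).mp
      (le_antisymm hle (Finset.sum_nonneg fun n _ => hterm π n))
    refine hinj π f ?_ hf hav
    rw [eigen_expansion S φ horth π]
    refine Submodule.sum_mem _ fun n _ => ?_
    by_cases h : n = 0 ∨ n = 1
    · refine Submodule.smul_mem _ _ (Submodule.subset_span ?_)
      rcases h with rfl | rfl <;> simp
    · push Not at h
      have hc := (mul_eq_zero.mp (hzero n (Finset.mem_univ n))).resolve_left
        (hwpos n h.1 h.2).ne'
      rw [pow_eq_zero_iff two_ne_zero] at hc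
      rw [hc, zero_smul]
      exact Submodule.zero_mem _
  · rintro rfl
    refine ⟨fun _ => rfl, fun π' _ => ?_⟩
    rw [hQf]
    exact Finset.sum_nonneg fun n _ => hterm π' n
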